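/- Let ℐ be an ideal of the ring 𝒪_{ℂⁿ,0} of germs of holomorphic functions at 0, and let g₁, …, g_k ∈ ℐ be such that the ideal IM(ℐ) generated by the initial monomials of all elements of ℐ equals the ideal generated by IM(g₁), …, IM(g_k). Then g₁, …, g_k generate ℐ. -/

import Mathlib

open MeasureTheory Filter Topology Complex
open scoped ENNReal

noncomputable section

/-- The homogeneous lexicographic order on monomials `z^α`. -/
def monLE {n : ℕ} (α β : Fin n → ℕ) : Prop :=
  α = β ∨ (∑ i, α i) < (∑ i, β i) ∨
    ((∑ i, α i) = (∑ i, β i) ∧ ∃ i, α i < β i ∧ ∀ j, j < i → α j = β j)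

/-- `a` is the family of Taylor coefficients of `f` at `0`. -/
def HasTaylorCoeffsAt {n : ℕ} (f : (Fin n → ℂ) → ℂ) (a : (Fin n → ℕ) → ℂ) : Prop :=
  ∃ U ∈ 𝓝 (0 : Fin n → ℂ), ∀ z ∈ U,
    Summable (fun α : Fin n → ℕ => a α * ∏ i, z i ^ α i) ∧
    f z = ∑' α : Fin n → ℕ, a α * ∏ i, z i ^ α i

/-- The ring of germs at `0` of complex-valued functions on `ℂⁿ`. -/
abbrev GermAt0 (n : ℕ) : Type := (𝓝 (0 : Fin n → ℂ)).Germ ℂ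

/-- The ring `𝒪_{ℂⁿ,0}` of germs at `0` of holomorphic functions, as a subring of the ring of
germs at `0` of all complex-valued functions. -/
def HoloGerms (n : ℕ) : Subring (GermAt0 n) where
  carrier := {F | ∃ f : (Fin n → ℂ) → ℂ, AnalyticAt ℂ f 0 ∧ F = (f : GermAt0 n)}
  zero_mem' := ⟨0, analyticAt_const, rfl⟩
  one_mem' := ⟨1, analyticAt_const, rfl⟩
  add_mem' := by
    rintro F G ⟨f, hf, rfl⟩ ⟨g, hg, rfl⟩
    exact ⟨f + g, hf.add hg, rfl⟩
  neg_mem' := by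
    rintro F ⟨f, hf, rfl⟩
    exact ⟨-f, hf.neg, rfl⟩
  mul_mem' := by
    rintro F G ⟨f, hf, rfl⟩ ⟨g, hg, rfl⟩
    exact ⟨f * g, hf.mul hg, rfl⟩

/-- `z^α` is the initial monomial `IM(F)` of the germ `F` at `0`. -/
def GermIsInitialMonomialOf {n : ℕ} (α : Fin n → ℕ) (F : GermAt0 n) : Prop :=
  ∃ (f : (Fin n → ℂ) → ℂ) (a : (Fin n → ℕ) → ℂ),
    F = (f : GermAt0 n) ∧ HasTaylorCoeffsAt f a ∧ a α ≠ 0 ∧ ∀ β, a β ≠ 0 → monLE α β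

/-!
Among the initial monomials of the generators `g j`, finitely many `z^(β j)` suffice to divide all
the others (Dickson's lemma). Positive weights `W i` can be chosen so that `z^(β j)` has strictly
smaller weight than every other monomial of the corresponding `g j`. Substituting
`z i = ε ^ W i * w i` with `ε` small then makes that `g j`, up to a constant factor, close in
`ℓ¹`-norm to its initial monomial. Division by the monomials `z^(β j)` is a bounded operation on
`ℓ¹`, so division by the rescaled `g j` is possible by a Neumann series, and its remainder has no
monomial divisible by any `z^(β j)`. For a dividend in the ideal, the remainder lies in the ideal
as well; if it were nonzero, its initial monomial would be such a multiple.
-/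

open scoped lp

/-! ### Bounded families and `ℓ¹` -/

section Ell1

variable {𝕜 κ F : Type*} [NontriviallyNormedField 𝕜] [NormedAddCommGroup F] [NormedSpace 𝕜 F]

open Classical in
variable (𝕜) in
/-- The standard unit vector of `ℓ¹` with a single entry `1` at `α`; for power series it stands
for the monomial `z^α`. -/
def ell1Basis (α : κ) : ℓ¹(κ, 𝕜) := lp.single 1 α 1

@[simp]
theorem ell1Basis_apply_self (α : κ) : ell1Basis 𝕜 α α = 1 := by
  classical exact lp.single_apply_self ..

theorem ell1Basis_apply_ne {α γ : κ} (h : γ ≠ α) : ell1Basis 𝕜 α γ = 0 := by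
  classical exact lp.single_apply_ne _ _ _ h

@[simp]
theorem norm_ell1Basis (α : κ) : ‖ell1Basis 𝕜 α‖ = 1 := by
  classical exact (lp.norm_single one_pos α 1).trans norm_one

theorem summable_norm_ell1 (s : ℓ¹(κ, 𝕜)) : Summable fun α => ‖s α‖ := by
  simpa using (lp.memℓp s).summable (by simp)

theorem norm_ell1_eq_tsum (s : ℓ¹(κ, 𝕜)) : ‖s‖ = ∑' α, ‖s α‖ := by
  simpa using lp.norm_eq_tsum_rpow (by simp) s

theorem ell1_clm_ext {T T' : ℓ¹(κ, 𝕜) →L[𝕜] F}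
    (h : ∀ α, T (ell1Basis 𝕜 α) = T' (ell1Basis 𝕜 α)) : T = T' := by
  classical
  refine lp.ext_continuousLinearMap (by simp) fun α => ContinuousLinearMap.ext_ring ?_
  exact h α

variable [CompleteSpace F]

theorem summable_ell1_smul (s : ℓ¹(κ, 𝕜)) {u : κ → F} {C : ℝ} (hu : ∀ α, ‖u α‖ ≤ C) :
    Summable fun α => s α • u α := by
  refine ((summable_norm_ell1 s).mul_right C).of_norm_bounded fun α => ?_
  rw [norm_smul]
  gcongr
  exact hu α

/-- The continuous linear map on `ℓ¹` that sends the unit vectors to a given bounded family. -/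
def ell1Lift (u : κ → F) {C : ℝ} (hu : ∀ α, ‖u α‖ ≤ C) : ℓ¹(κ, 𝕜) →L[𝕜] F :=
  LinearMap.mkContinuous
    { toFun := fun s => ∑' α, s α • u α
      map_add' := fun s t => by
        rw [← (summable_ell1_smul s hu).tsum_add (summable_ell1_smul t hu)]
        exact tsum_congr fun α => add_smul _ _ _
      map_smul' := fun c s => by
        rw [RingHom.id_apply, ← (summable_ell1_smul s hu).tsum_const_smul]
        exact tsum_congr fun α => smul_assoc c (s α) (u α) }
    C fun s => by
      rw [norm_ell1_eq_tsum, ← tsum_mul_left]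
      refine tsum_of_norm_bounded ((summable_norm_ell1 s).mul_left C).hasSum fun α => ?_
      rw [norm_smul, mul_comm]
      gcongr
      exact hu α

theorem ell1Lift_apply {u : κ → F} {C : ℝ} (hu : ∀ α, ‖u α‖ ≤ C) (s : ℓ¹(κ, 𝕜)) :
    ell1Lift u hu s = ∑' α, s α • u α := rfl

theorem map_ell1Lift {G : Type*} [NormedAddCommGroup G] [NormedSpace 𝕜 G] (T : F →L[𝕜] G)
    {u : κ → F} {C : ℝ} (hu : ∀ α, ‖u α‖ ≤ C) (s : ℓ¹(κ, 𝕜)) :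
    T (ell1Lift u hu s) = ∑' α, s α • T (u α) := by
  simp only [ell1Lift_apply, T.map_tsum (summable_ell1_smul s hu), map_smul]

@[simp]
theorem ell1Lift_ell1Basis {u : κ → F} {C : ℝ} (hu : ∀ α, ‖u α‖ ≤ C) (α : κ) :
    ell1Lift u hu (ell1Basis 𝕜 α) = u α := by
  rw [ell1Lift_apply, tsum_eq_single α fun γ hγ => by rw [ell1Basis_apply_ne hγ, zero_smul],
    ell1Basis_apply_self, one_smul]

theorem opNorm_le_of_norm_ell1Basis_le {T : ℓ¹(κ, 𝕜) →L[𝕜] F} {C : ℝ} (hC : 0 ≤ C)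
    (hT : ∀ α, ‖T (ell1Basis 𝕜 α)‖ ≤ C) : ‖T‖ ≤ C := by
  rw [ell1_clm_ext (T' := ell1Lift _ hT) fun α => (ell1Lift_ell1Basis hT α).symm]
  exact LinearMap.mkContinuous_norm_le _ hC _

theorem exists_sub_apply_eq {T : F →L[𝕜] F} (hT : ‖T‖ < 1) (x : F) : ∃ s, s - T s = x := by
  let u := Units.oneSub T hT
  exact ⟨u⁻¹.val x, DFunLike.congr_fun u.mul_inv x⟩

end Ell1

/-! ### Convolution and division in `ℓ¹` -/

section Convolution

variable {𝕜 κ : Type*} [NontriviallyNormedField 𝕜] [CompleteSpace 𝕜] [Add κ]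

variable (𝕜) in
/-- Multiplication by the monomial `z^δ` on `ℓ¹`. -/
def ell1Shift (δ : κ) : ℓ¹(κ, 𝕜) →L[𝕜] ℓ¹(κ, 𝕜) :=
  ell1Lift (fun α => ell1Basis 𝕜 (α + δ)) fun α => (norm_ell1Basis (α + δ)).le

theorem norm_ell1Shift_le (δ : κ) : ‖ell1Shift 𝕜 δ‖ ≤ 1 :=
  opNorm_le_of_norm_ell1Basis_le zero_le_one fun α => by simp [ell1Shift]

variable (𝕜 κ) in
/-- Convolution on `ℓ¹`: the Cauchy product of absolutely summable power series, with exponents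
in a type with addition. -/
def ell1Mul : ℓ¹(κ, 𝕜) →L[𝕜] ℓ¹(κ, 𝕜) →L[𝕜] ℓ¹(κ, 𝕜) :=
  ell1Lift (ell1Shift 𝕜) norm_ell1Shift_le

@[simp]
theorem ell1Mul_ell1Basis_ell1Basis (α γ : κ) :
    ell1Mul 𝕜 κ (ell1Basis 𝕜 α) (ell1Basis 𝕜 γ) = ell1Basis 𝕜 (γ + α) := by
  simp [ell1Mul, ell1Shift]

theorem norm_ell1Mul_apply_le (s t : ℓ¹(κ, 𝕜)) : ‖ell1Mul 𝕜 κ s t‖ ≤ ‖s‖ * ‖t‖ := by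
  have h : ‖ell1Mul 𝕜 κ‖ ≤ 1 :=
    opNorm_le_of_norm_ell1Basis_le zero_le_one fun α => by simpa [ell1Mul] using norm_ell1Shift_le α
  simpa using (ell1Mul 𝕜 κ).le_of_opNorm₂_le_of_le h le_rfl le_rfl

variable {J : Type*} [Fintype J]

theorem exists_ell1Basis_eq_sum_add (β : J → κ) (α : κ) :
    ∃ (q : J → ℓ¹(κ, 𝕜)) (r : ℓ¹(κ, 𝕜)),
      ell1Basis 𝕜 α = ∑ j, ell1Mul 𝕜 κ (ell1Basis 𝕜 (β j)) (q j) + r ∧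
      (∀ j γ, r (γ + β j) = 0) ∧ ∑ j, ‖q j‖ ≤ 1 ∧ ‖r‖ ≤ 1 := by
  classical
  by_cases hα : ∃ j γ, α = γ + β j
  · obtain ⟨j, γ, rfl⟩ := hα
    refine ⟨Pi.single j (ell1Basis 𝕜 γ), 0, ?_, fun _ _ => rfl, ?_, by simp⟩
    · rw [Fintype.sum_eq_single j fun i hi => by rw [Pi.single_eq_of_ne hi, map_zero]]
      simp
    · rw [Fintype.sum_eq_single j fun i hi => by rw [Pi.single_eq_of_ne hi, norm_zero]]
      simp
  · push Not at hα
    exact ⟨0, ell1Basis 𝕜 α, by simp, fun j γ => ell1Basis_apply_ne (hα j γ).symm, by simp, by simp⟩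

theorem exists_ell1_monomial_division (β : J → κ) :
    ∃ (Q : J → ℓ¹(κ, 𝕜) →L[𝕜] ℓ¹(κ, 𝕜)) (R : ℓ¹(κ, 𝕜) →L[𝕜] ℓ¹(κ, 𝕜)),
      (∀ s, s = ∑ j, ell1Mul 𝕜 κ (ell1Basis 𝕜 (β j)) (Q j s) + R s) ∧
      (∀ s j γ, R s (γ + β j) = 0) ∧ ∀ α, ∑ j, ‖Q j (ell1Basis 𝕜 α)‖ ≤ 1 := by
  choose q r hqr hr hq hr_norm using exists_ell1Basis_eq_sum_add (𝕜 := 𝕜) β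
  have hq_norm (j : J) (α : κ) : ‖q α j‖ ≤ 1 :=
    (Finset.single_le_sum (fun i _ => norm_nonneg (q α i)) (Finset.mem_univ j)).trans (hq α)
  let Q (j : J) : ℓ¹(κ, 𝕜) →L[𝕜] ℓ¹(κ, 𝕜) := ell1Lift (fun α => q α j) (hq_norm j)
  let R : ℓ¹(κ, 𝕜) →L[𝕜] ℓ¹(κ, 𝕜) := ell1Lift r hr_norm
  refine ⟨Q, R, fun s => ?_, fun s j γ => ?_, fun α => by simpa [Q] using hq α⟩
  · have h : .id 𝕜 ℓ¹(κ, 𝕜) = ∑ j, ell1Mul 𝕜 κ (ell1Basis 𝕜 (β j)) ∘L Q j + R :=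
      ell1_clm_ext fun α => by simpa [Q, R] using hqr α
    simpa using DFunLike.congr_fun h s
  · have h : lp.evalCLM 𝕜 (fun _ : κ => 𝕜) 1 (γ + β j) ∘L R = 0 :=
      ell1_clm_ext fun α => by simpa [R] using! hr α j γ
    exact DFunLike.congr_fun h s

/-- With `b = 1`, the map `s ↦ ∑ⱼ hⱼ Qⱼ(s) + R(s)` is a perturbation of the identity of norm at most
`c < 1`, so it is onto. -/
theorem exists_ell1_division {β : J → κ} {h : J → ℓ¹(κ, 𝕜)} {b : J → 𝕜} {c : ℝ} (hc₀ : 0 ≤ c)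
    (hc₁ : c < 1) (hh : ∀ j, ‖ell1Basis 𝕜 (β j) - b j • h j‖ ≤ c) (x : ℓ¹(κ, 𝕜)) :
    ∃ (q : J → ℓ¹(κ, 𝕜)) (r : ℓ¹(κ, 𝕜)),
      x = ∑ j, ell1Mul 𝕜 κ (h j) (q j) + r ∧ ∀ j γ, r (γ + β j) = 0 := by
  obtain ⟨Q, R, hQR, hR, hQ⟩ := exists_ell1_monomial_division (𝕜 := 𝕜) β
  let T := ∑ j, ell1Mul 𝕜 κ (ell1Basis 𝕜 (β j) - b j • h j) ∘L Q j
  have hT : ‖T‖ ≤ c := opNorm_le_of_norm_ell1Basis_le hc₀ fun α => calc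
    ‖T (ell1Basis 𝕜 α)‖ ≤ ∑ j, c * ‖Q j (ell1Basis 𝕜 α)‖ := by
      rw [sum_apply]
      refine norm_sum_le_of_le _ fun j _ => (norm_ell1Mul_apply_le _ _).trans ?_
      exact mul_le_mul_of_nonneg_right (hh j) (norm_nonneg _)
    _ ≤ c := by
      rw [← Finset.mul_sum]
      exact mul_le_of_le_one_right hc₀ (hQ α)
  have hT_apply (s : ℓ¹(κ, 𝕜)) : T s = ∑ j, ell1Mul 𝕜 κ (ell1Basis 𝕜 (β j)) (Q j s) -
      ∑ j, ell1Mul 𝕜 κ (h j) (b j • Q j s) := by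
    simp [T]
  obtain ⟨s, hs⟩ := exists_sub_apply_eq (hT.trans_lt hc₁) x
  refine ⟨fun j => b j • Q j s, R s, ?_, hR s⟩
  calc x = s - T s := hs.symm
    _ = (∑ j, ell1Mul 𝕜 κ (ell1Basis 𝕜 (β j)) (Q j s) + R s) - T s := by rw [← hQR s]
    _ = ∑ j, ell1Mul 𝕜 κ (h j) (b j • Q j s) + R s := by rw [hT_apply]; abel

end Convolution

/-! ### Monomials and words -/

section Monomial

variable {ι R : Type*} [Fintype ι]

/-- The monomial `z^α` in multi-index notation. -/
def multiPow [CommMonoid R] (z : ι → R) (α : ι → ℕ) : R := ∏ i, z i ^ α i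

theorem multiPow_add [CommMonoid R] (z : ι → R) (α β : ι → ℕ) :
    multiPow z (α + β) = multiPow z α * multiPow z β := by
  simp only [multiPow, Pi.add_apply, pow_add, Finset.prod_mul_distrib]

theorem mul_multiPow [CommMonoid R] (z w : ι → R) (α : ι → ℕ) :
    multiPow (z * w) α = multiPow z α * multiPow w α := by
  simp only [multiPow, Pi.mul_apply, mul_pow, Finset.prod_mul_distrib]

theorem multiPow_pow [CommMonoid R] (x : R) (W α : ι → ℕ) :
    multiPow (fun i => x ^ W i) α = x ^ ∑ i, W i * α i := by
  simp only [multiPow, ← pow_mul, Finset.prod_pow_eq_pow_sum]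

theorem norm_multiPow_le_one [NormedField R] {z : ι → R} (hz : ‖z‖ ≤ 1) (α : ι → ℕ) :
    ‖multiPow z α‖ ≤ 1 := by
  rw [multiPow, norm_prod]
  exact Finset.prod_le_one (fun i _ => norm_nonneg _) fun i _ => by
    rw [norm_pow]
    exact pow_le_one₀ (norm_nonneg _) ((norm_le_pi_norm z i).trans hz)

/-- The exponent of the monomial spelled by the word `c`: the number of times each letter
occurs. -/
def wordExponent {J : Type*} [Fintype J] [DecidableEq ι] (c : J → ι) (i : ι) : ℕ :=
  Fintype.card {j // c j = i}

theorem prod_word_eq_multiPow [CommMonoid R] {J : Type*} [Fintype J] [DecidableEq ι]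
    (c : J → ι) (z : ι → R) :
    ∏ j, z (c j) = multiPow z (wordExponent c) := by
  rw [← Fintype.prod_fiberwise' c z]
  exact Finset.prod_congr rfl fun i _ => by simp [wordExponent]

theorem exists_word_prod_eq_multiPow (R : Type*) [CommMonoid R] (α : ι → ℕ) :
    ∃ c : Fin (∑ i, α i) → ι, ∀ z : ι → R, ∏ j, z (c j) = multiPow z α := by
  let e : Fin (∑ i, α i) ≃ Σ i, Fin (α i) := (Fintype.equivFinOfCardEq (by simp)).symm
  refine ⟨fun j => (e j).1, fun z => ?_⟩
  rw [e.prod_comp fun x => z x.1, Fintype.prod_sigma]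
  simp [multiPow]

end Monomial

/-! ### Power series with `ℓ¹` coefficients -/

section Series

variable {𝕜 ι : Type*} [NontriviallyNormedField 𝕜] [Fintype ι]

variable (𝕜) in
theorem exists_multilinear_eq_ite_multiPow (α : ι → ℕ) (m : ℕ) :
    ∃ M : ContinuousMultilinearMap 𝕜 (fun _ : Fin m => ι → 𝕜) 𝕜,
      ‖M‖ ≤ 1 ∧ ∀ z : ι → 𝕜, M (fun _ => z) = if ∑ i, α i = m then multiPow z α else 0 := by
  by_cases h : ∑ i, α i = m
  · subst h
    obtain ⟨c, hc⟩ := exists_word_prod_eq_multiPow 𝕜 α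
    refine ⟨(ContinuousMultilinearMap.mkPiAlgebra 𝕜 _ 𝕜).compContinuousLinearMap
      fun j => .proj (c j), ?_, fun z => by simpa using hc z⟩
    refine ContinuousMultilinearMap.opNorm_le_bound zero_le_one fun v => ?_
    simpa [norm_prod] using
      Finset.prod_le_prod (fun _ _ => norm_nonneg _) fun j _ => norm_le_pi_norm (v j) (c j)
  · exact ⟨0, by simp, fun z => by simp [h]⟩

variable [CompleteSpace 𝕜]

/-- The sum at `z` of a power series with absolutely summable coefficients, for `z` in the closed
unit polydisc. -/
def ell1Eval (z : ι → 𝕜) (hz : ‖z‖ ≤ 1) : ℓ¹(ι → ℕ, 𝕜) →L[𝕜] 𝕜 :=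
  ell1Lift (multiPow z) (norm_multiPow_le_one hz)

theorem ell1Eval_ell1Mul {z : ι → 𝕜} (hz : ‖z‖ ≤ 1) (x y : ℓ¹(ι → ℕ, 𝕜)) :
    ell1Eval z hz (ell1Mul 𝕜 _ x y) = ell1Eval z hz x * ell1Eval z hz y := by
  have h : (ell1Eval z hz).postcomp _ ∘L ell1Mul 𝕜 (ι → ℕ) =
      (ContinuousLinearMap.mul 𝕜 𝕜).bilinearComp (ell1Eval z hz) (ell1Eval z hz) :=
    ell1_clm_ext fun α => ell1_clm_ext fun γ => by
      simp [ell1Eval, multiPow_add, mul_comm]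
  exact DFunLike.congr_fun (DFunLike.congr_fun h x) y

theorem analyticAt_tsum_mul_multiPow (x : ℓ¹(ι → ℕ, 𝕜)) :
    AnalyticAt 𝕜 (fun z => ∑' α, x α * multiPow z α) 0 := by
  choose M hM_norm hM using fun m α => exists_multilinear_eq_ite_multiPow (ι := ι) 𝕜 α m
  let p : FormalMultilinearSeries 𝕜 (ι → 𝕜) 𝕜 := fun m => ell1Lift (M m) (hM_norm m) x
  have hp (m : ℕ) (z : ι → 𝕜) :
      p m (fun _ => z) = ∑' α : (fun α : ι → ℕ => ∑ i, α i) ⁻¹' {m}, x α * multiPow z α := by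
    rw [tsum_subtype _ fun α => x α * multiPow z α]
    refine (map_ell1Lift (ContinuousMultilinearMap.apply 𝕜 _ 𝕜 fun _ => z) (hM_norm m) x).trans
      (tsum_congr fun α => ?_)
    by_cases h : ∑ i, α i = m <;> simp [hM, h]
  refine ⟨p, 1, ?_, one_pos, fun {z} hz => ?_⟩
  · refine p.le_radius_of_bound ‖x‖ (r := 1) fun m => ?_
    have h : ‖ell1Lift (𝕜 := 𝕜) (M m) (hM_norm m)‖ ≤ 1 :=
      opNorm_le_of_norm_ell1Basis_le zero_le_one fun α => by simpa using hM_norm m α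
    simpa using ContinuousLinearMap.le_of_opNorm_le _ h x
  · have hz' : ‖z‖ ≤ 1 := by
      rw [← ENNReal.ofReal_one, Metric.eball_ofReal, mem_ball_zero_iff] at hz
      exact hz.le
    simp only [hp, zero_add]
    exact (summable_ell1_smul x (norm_multiPow_le_one hz')).hasSum.tsum_fiberwise _

end Series

/-! ### Taylor coefficients of analytic functions -/

section Taylor

variable {𝕜 ι : Type*} [NontriviallyNormedField 𝕜] [Fintype ι]

theorem multilinear_diag_eq_sum_words [DecidableEq ι] {m : ℕ}
    (M : ContinuousMultilinearMap 𝕜 (fun _ : Fin m => ι → 𝕜) 𝕜) (z : ι → 𝕜) :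
    M (fun _ => z) =
      ∑ c : Fin m → ι, M (fun j => Pi.single (c j) 1) * multiPow z (wordExponent c) := by
  conv_lhs => rw [pi_eq_sum_univ' z]
  rw [M.map_sum]
  refine Finset.sum_congr rfl fun c _ => ?_
  rw [M.map_smul_univ, prod_word_eq_multiPow, smul_eq_mul, mul_comm]

theorem norm_word_term_le [DecidableEq ι] {m : ℕ}
    (M : ContinuousMultilinearMap 𝕜 (fun _ : Fin m => ι → 𝕜) 𝕜) (z : ι → 𝕜) (c : Fin m → ι) :
    ‖M (fun j => Pi.single (c j) 1) * multiPow z (wordExponent c)‖ ≤ ‖M‖ * ‖z‖ ^ m := by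
  rw [norm_mul, ← prod_word_eq_multiPow, norm_prod]
  gcongr
  · simpa [Pi.norm_single] using M.le_opNorm fun j => Pi.single (c j) 1
  · simpa using Finset.prod_le_prod (s := .univ) (fun j _ => norm_nonneg (z (c j)))
      fun j _ => norm_le_pi_norm z (c j)

theorem summable_word_terms [DecidableEq ι] [CompleteSpace 𝕜]
    (p : FormalMultilinearSeries 𝕜 (ι → 𝕜) 𝕜) {z : ι → 𝕜}
    (hz : ↑(Fintype.card ι * ‖z‖₊) < p.radius) :
    Summable fun w : Σ m, Fin m → ι =>
      p w.1 (fun j => Pi.single (w.2 j) 1) * multiPow z (wordExponent w.2) := by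
  refine .of_norm_bounded (g := fun w => ‖p w.1‖ * ‖z‖ ^ w.1) ?_ fun w => norm_word_term_le _ z w.2
  refine (summable_sigma_of_nonneg fun _ => by positivity).2 ⟨fun _ => .of_finite, ?_⟩
  have h_card (m : ℕ) :
      ∑' _ : Fin m → ι, ‖p m‖ * ‖z‖ ^ m = ‖p m‖ * ↑(Fintype.card ι * ‖z‖₊) ^ m := by
    simp [tsum_fintype, mul_pow, mul_left_comm]
  simpa only [h_card] using p.summable_norm_mul_pow hz

theorem hasSum_fiberwise_mul {W κ : Type*} [CompleteSpace 𝕜] {a : W → 𝕜} {e : W → κ} {φ : κ → 𝕜}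
    {S : 𝕜} (h : HasSum (fun w => a w * φ (e w)) S) :
    HasSum (fun k => (∑' w : e ⁻¹' {k}, a w) * φ k) S := by
  have h_fiber (k : κ) : ∑' w : e ⁻¹' {k}, a w * φ (e w) = (∑' w : e ⁻¹' {k}, a w) * φ k := by
    rw [← tsum_mul_right]
    exact tsum_congr fun w => by rw [w.2]
  simpa only [h_fiber] using h.tsum_fiberwise e

theorem exists_eventually_hasSum_multiPow_of_analyticAt [CompleteSpace 𝕜] {f : (ι → 𝕜) → 𝕜}
    (hf : AnalyticAt 𝕜 f 0) :
    ∃ a : (ι → ℕ) → 𝕜, ∀ᶠ z in 𝓝 0, HasSum (fun α => a α * multiPow z α) (f z) := by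
  classical
  obtain ⟨p, hp⟩ := hf
  have h_radius : ∀ᶠ z : ι → 𝕜 in 𝓝 0, ↑(Fintype.card ι * ‖z‖₊) < p.radius := by
    have h : Continuous fun z : ι → 𝕜 => ((Fintype.card ι * ‖z‖₊ : NNReal) : ℝ≥0∞) := by fun_prop
    exact h.continuousAt.eventually_lt_const (by simpa using hp.radius_pos)
  refine ⟨_, (hp.eventually_hasSum.and h_radius).mono fun z ⟨hz, hz_radius⟩ =>
    hasSum_fiberwise_mul (a := fun w : Σ m, Fin m → ι => p w.1 fun j => Pi.single (w.2 j) 1)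
      (e := fun w => wordExponent w.2) ?_⟩
  rw [zero_add] at hz
  refine hz.sigma_of_hasSum (fun m => ?_) (summable_word_terms p hz_radius)
  rw [multilinear_diag_eq_sum_words]
  exact hasSum_fintype _

end Taylor

/-! ### The homogeneous lexicographic order -/

section MonomialOrder

variable {n : ℕ}

/-- The exponent `α` as an element of a lexicographic product in which `monLE` becomes the order:
total degree first, then the exponents from left to right. -/
def monKey (α : Fin n → ℕ) : ℕ ×ₗ Lex (Fin n → ℕ) := toLex (∑ i, α i, toLex α)

theorem monLE_iff_monKey_le {α β : Fin n → ℕ} : monLE α β ↔ monKey α ≤ monKey β := by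
  have h_lex : toLex α < toLex β ↔ ∃ i, α i < β i ∧ ∀ j, j < i → α j = β j :=
    exists_congr fun i => and_comm
  simp only [monKey, Prod.Lex.toLex_le_toLex, le_iff_eq_or_lt (a := toLex α), toLex_inj, monLE]
  rcases eq_or_ne α β with rfl | h_ne
  · simp
  · simp only [h_ne, false_or]
    exact or_congr_right (and_congr_right fun _ => h_lex.symm)

theorem exists_forall_monLE {S : Set (Fin n → ℕ)} (hS : S.Nonempty) :
    ∃ α ∈ S, ∀ β ∈ S, monLE α β := by
  obtain ⟨α, hα, h_min⟩ := (InvImage.wf monKey wellFounded_lt).has_min S hS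
  exact ⟨α, hα, fun β hβ => monLE_iff_monKey_le.2 (not_lt.1 (h_min β hβ))⟩

/-- The number whose base-`K` digits, most significant first, are the entries of `α`. -/
def lexWeight (K : ℕ) (α : Fin n → ℕ) : ℕ := ∑ i, K ^ (i.rev : ℕ) * α i

theorem lexWeight_succ (K : ℕ) (α : Fin (n + 1) → ℕ) :
    lexWeight K α = K ^ n * α 0 + lexWeight K (Fin.tail α) := by
  simp [lexWeight, Fin.sum_univ_succ, Fin.tail]

theorem lexWeight_lt_pow {K : ℕ} {α : Fin n → ℕ} (hα : ∀ i, α i < K) : lexWeight K α < K ^ n := by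
  induction n with
  | zero => simp [lexWeight]
  | succ n ih => calc
      lexWeight K α = K ^ n * α 0 + lexWeight K (Fin.tail α) := lexWeight_succ K α
      _ < K ^ n * α 0 + K ^ n := by gcongr; exact ih fun i => hα i.succ
      _ = K ^ n * (α 0 + 1) := by ring
      _ ≤ K ^ (n + 1) := by rw [pow_succ]; gcongr; exact hα 0

theorem lexWeight_lt_lexWeight {K : ℕ} {α β : Fin n → ℕ} (hα : ∀ i, α i < K)
    {i : Fin n} (hi : α i < β i) (h_eq : ∀ j < i, α j = β j) : lexWeight K α < lexWeight K β := by
  induction n with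
  | zero => exact i.elim0
  | succ n ih =>
    rw [lexWeight_succ, lexWeight_succ]
    cases i using Fin.cases with
    | zero => calc
        K ^ n * α 0 + lexWeight K (Fin.tail α) < K ^ n * α 0 + K ^ n := by
          gcongr; exact lexWeight_lt_pow fun i => hα i.succ
        _ = K ^ n * (α 0 + 1) := by ring
        _ ≤ K ^ n * β 0 := by gcongr; exact hi
        _ ≤ _ := Nat.le_add_right ..
    | succ i =>
      rw [h_eq 0 i.succ_pos]
      gcongr
      exact ih (fun i => hα i.succ) hi fun j hj => h_eq j.succ (Fin.succ_lt_succ_iff.2 hj)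

theorem mul_degree_add_lexWeight_lt {K : ℕ} {α β : Fin n → ℕ} (hα : ∀ i, α i < K)
    (h_le : monLE α β) (h_ne : β ≠ α) :
    K ^ n * ∑ i, α i + lexWeight K α < K ^ n * ∑ i, β i + lexWeight K β := by
  rcases h_le with rfl | h_deg | ⟨h_deg, i, hi, h_eq⟩
  · exact absurd rfl h_ne
  · calc K ^ n * ∑ i, α i + lexWeight K α < K ^ n * ∑ i, α i + K ^ n := by
          gcongr; exact lexWeight_lt_pow hα
      _ = K ^ n * (∑ i, α i + 1) := by ring
      _ ≤ K ^ n * ∑ i, β i := by gcongr; exact h_deg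
      _ ≤ _ := Nat.le_add_right ..
  · rw [h_deg]
    gcongr
    exact lexWeight_lt_lexWeight hα hi h_eq

theorem exists_weight_lt_of_monLE {J : Type*} [Finite J] (β : J → Fin n → ℕ) :
    ∃ W : Fin n → ℕ, (∀ i, W i ≠ 0) ∧ ∀ j γ, monLE (β j) γ → γ ≠ β j →
      ∑ i, W i * β j i < ∑ i, W i * γ i := by
  obtain ⟨K, hK⟩ := (Set.finite_range fun p : J × Fin n => β p.1 p.2).bddAbove
  have hβ (j : J) (i : Fin n) : β j i < K + 1 := Nat.lt_succ_of_le (hK ⟨(j, i), rfl⟩)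
  have h_weight (γ : Fin n → ℕ) : ∑ i, ((K + 1) ^ n + (K + 1) ^ (i.rev : ℕ)) * γ i =
      (K + 1) ^ n * ∑ i, γ i + lexWeight (K + 1) γ := by
    simp only [lexWeight, add_mul, Finset.sum_add_distrib, Finset.mul_sum]
  refine ⟨fun i => (K + 1) ^ n + (K + 1) ^ (i.rev : ℕ), fun i => by positivity,
    fun j γ h_le h_ne => ?_⟩
  simpa only [h_weight] using mul_degree_add_lexWeight_lt (hβ j) h_le h_ne

end MonomialOrder

theorem exists_finite_subset_forall_exists_le {X : Type*} [PartialOrder X] [WellQuasiOrderedLE X]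
    (S : Set X) : ∃ M ⊆ S, M.Finite ∧ ∀ a ∈ S, ∃ b ∈ M, b ≤ a :=
  ⟨{a | Minimal (· ∈ S) a}, fun _ ha => ha.prop,
    WellQuasiOrderedLE.finite_of_isAntichain (setOfPred_minimal_antichain _),
    fun a ha => (exists_minimal_le_of_wellFoundedLT _ a ha).imp fun _ h => ⟨h.2, h.1⟩⟩

/-! ### Rescaling convergent power series -/

section Rescaling

variable {𝕜 κ : Type*} [NontriviallyNormedField 𝕜]

theorem tendsto_tsum_norm_mul_pow_zero {c : κ → 𝕜} {N : κ → ℕ} {ε₀ : 𝕜} (hε₀ : ε₀ ≠ 0)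
    (h_sum : Summable fun k => ‖c k * ε₀ ^ N k‖) (hN : ∀ k, c k ≠ 0 → N k ≠ 0) :
    Tendsto (fun ε => ∑' k, ‖c k * ε ^ N k‖) (𝓝 0) (𝓝 0) := by
  have h_term (k : κ) : Tendsto (fun ε => ‖c k * ε ^ N k‖) (𝓝 0) (𝓝 0) := by
    have h : Continuous fun ε => ‖c k * ε ^ N k‖ := by fun_prop
    by_cases hk : c k = 0
    · simp [hk]
    · simpa [hN k hk] using h.tendsto 0
  have h_bound : ∀ᶠ ε : 𝕜 in 𝓝 0, ‖ε‖ < ‖ε₀‖ :=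
    continuous_norm.continuousAt.eventually_lt_const (by simpa using hε₀)
  simpa using tendsto_tsum_of_dominated_convergence h_sum h_term <| h_bound.mono fun ε hε k => by
    simp only [norm_mul, norm_pow, norm_norm]
    gcongr

theorem ell1Basis_sub_leading_quotient_eq {a : κ → 𝕜} {N : κ → ℕ} {β : κ} (hβ : a β ≠ 0)
    (hN : ∀ k, a k ≠ 0 → k ≠ β → N β < N k) {ε : 𝕜} (hε : ε ≠ 0) (k : κ) :
    ell1Basis 𝕜 β k - (a β * ε ^ N β)⁻¹ * (a k * ε ^ N k) =
      (ell1Basis 𝕜 β k - (a β)⁻¹ * a k) * ε ^ (N k - N β) := by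
  rcases eq_or_ne k β with rfl | hk
  · simp only [ell1Basis_apply_self, inv_mul_cancel₀ (mul_ne_zero hβ (pow_ne_zero _ hε)),
      inv_mul_cancel₀ hβ, sub_self, zero_mul]
  rcases eq_or_ne (a k) 0 with hak | hak
  · simp only [ell1Basis_apply_ne hk, hak, zero_mul, mul_zero, sub_self]
  · rw [ell1Basis_apply_ne hk, pow_sub₀ ε hε (hN k hak hk).le]
    field_simp
    ring

theorem eventually_norm_ell1Basis_sub_smul_le {a : κ → 𝕜} {N : κ → ℕ} {β : κ} {ε₀ : 𝕜}
    (hε₀ : ε₀ ≠ 0) (h_sum : Summable fun k => ‖a k * ε₀ ^ N k‖) (hβ : a β ≠ 0)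
    (hN : ∀ k, a k ≠ 0 → k ≠ β → N β < N k) {δ : ℝ} (hδ : 0 < δ) :
    ∀ᶠ ε in 𝓝[≠] 0, ∀ x : ℓ¹(κ, 𝕜), (∀ k, x k = a k * ε ^ N k) →
      ‖ell1Basis 𝕜 β - (a β * ε ^ N β)⁻¹ • x‖ ≤ δ := by
  let c (k : κ) : 𝕜 := ell1Basis 𝕜 β k - (a β)⁻¹ * a k
  have hc (k : κ) (hk : c k ≠ 0) : N k - N β ≠ 0 := by
    have hkβ : k ≠ β := by rintro rfl; simp [c, hβ] at hk
    have hak : a k ≠ 0 := fun h => by simp [c, ell1Basis_apply_ne hkβ, h] at hk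
    exact (Nat.sub_pos_of_lt (hN k hak hkβ)).ne'
  have h_lim : Tendsto (fun ε => ∑' k, ‖c k * ε ^ (N k - N β)‖) (𝓝 0) (𝓝 0) := by
    refine tendsto_tsum_norm_mul_pow_zero hε₀ ?_ hc
    simp only [c, ← ell1Basis_sub_leading_quotient_eq hβ hN hε₀]
    refine ((summable_norm_ell1 (ell1Basis 𝕜 β)).add
      (h_sum.mul_left ‖(a β * ε₀ ^ N β)⁻¹‖)).of_nonneg_of_le (fun _ => norm_nonneg _) fun k => ?_
    exact (norm_sub_le _ _).trans_eq (by rw [norm_mul])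
  filter_upwards [nhdsWithin_le_nhds (h_lim.eventually_le_const hδ), self_mem_nhdsWithin]
    with ε h_le hε x hx
  refine le_of_eq_of_le ((norm_ell1_eq_tsum _).trans (tsum_congr fun k => ?_)) h_le
  rw [← ell1Basis_sub_leading_quotient_eq hβ hN hε k, ← hx k]
  rfl

theorem tendsto_pow_weight_zero {ι : Type*} {W : ι → ℕ} (hW : ∀ i, W i ≠ 0) :
    Tendsto (fun (ε : 𝕜) i => ε ^ W i) (𝓝[≠] 0) (𝓝 0) :=
  tendsto_nhdsWithin_of_tendsto_nhds <| tendsto_pi_nhds.2 fun i => by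
    simpa [hW i] using (continuous_pow (M := 𝕜) (W i)).tendsto 0

theorem eventually_norm_mul_le_one {ι : Type*} [Fintype ι] (σ : ι → 𝕜) :
    ∀ᶠ z in 𝓝 0, ‖σ * z‖ ≤ 1 := by
  have h : Continuous fun z => ‖σ * z‖ := by fun_prop
  exact h.continuousAt.eventually_le_const (by simp)

theorem analyticAt_tsum_mul_multiPow_mul [CompleteSpace 𝕜] {ι : Type*} [Fintype ι]
    (x : ℓ¹(ι → ℕ, 𝕜)) (σ : ι → 𝕜) :
    AnalyticAt 𝕜 (fun z => ∑' α, x α * multiPow (σ * z) α) 0 := by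
  have h := analyticAt_tsum_mul_multiPow x
  exact h.comp_of_eq ((ContinuousLinearMap.mul 𝕜 (ι → 𝕜) σ).analyticAt 0) (by simp)

variable {ι : Type*} [Fintype ι] {f : (ι → ℂ) → ℂ} {a : (ι → ℕ) → ℂ}

theorem eventually_exists_ell1_rescaling
    (hf : ∀ᶠ z in 𝓝 0, HasSum (fun α => a α * multiPow z α) (f z)) :
    ∀ᶠ ρ in 𝓝 0, ∃ x : ℓ¹(ι → ℕ, ℂ), (∀ α, x α = a α * multiPow ρ α) ∧
      ∀ w (hw : ‖w‖ ≤ 1), ell1Eval w hw x = f (ρ * w) := by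
  obtain ⟨r, hr, hf⟩ := Metric.eventually_nhds_iff.1 hf
  filter_upwards [Metric.ball_mem_nhds 0 hr] with ρ hρ
  have h_mem : Memℓp (fun α => a α * multiPow ρ α) 1 :=
    memℓp_gen (by simpa using (hf hρ).summable.norm)
  refine ⟨⟨_, h_mem⟩, fun α => rfl, fun w hw => ?_⟩
  have hρw : dist (ρ * w) 0 < r := by
    rw [mem_ball_zero_iff] at hρ
    rw [dist_zero_right]
    exact (norm_mul_le_of_le le_rfl hw).trans_lt (by rwa [mul_one])
  rw [← (hf hρw).tsum_eq]
  exact tsum_congr fun α => by simp [mul_multiPow, mul_assoc]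

end Rescaling

/-! ### Division with remainder -/

section Division

variable {ι : Type*} [Fintype ι]

theorem eventually_exists_ell1_rescaling_near_ell1Basis {g : (ι → ℂ) → ℂ} {a : (ι → ℕ) → ℂ}
    (hg : ∀ᶠ z in 𝓝 0, HasSum (fun α => a α * multiPow z α) (g z)) {W : ι → ℕ}
    (hW : ∀ i, W i ≠ 0) {β : ι → ℕ} (hβ : a β ≠ 0)
    (h_lt : ∀ γ, a γ ≠ 0 → γ ≠ β → ∑ i, W i * β i < ∑ i, W i * γ i) {δ : ℝ} (hδ : 0 < δ) :
    ∀ᶠ ε in 𝓝[≠] (0 : ℂ), ∃ (x : ℓ¹(ι → ℕ, ℂ)) (b : ℂ), ‖ell1Basis ℂ β - b • x‖ ≤ δ ∧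
      ∀ w (hw : ‖w‖ ≤ 1), ell1Eval w hw x = g ((fun i => ε ^ W i) * w) := by
  have h_rescale : ∀ᶠ ε in 𝓝[≠] (0 : ℂ), ∃ x : ℓ¹(ι → ℕ, ℂ),
      (∀ α, x α = a α * ε ^ ∑ i, W i * α i) ∧
      ∀ w (hw : ‖w‖ ≤ 1), ell1Eval w hw x = g ((fun i => ε ^ W i) * w) := by
    simpa only [multiPow_pow] using
      (tendsto_pow_weight_zero hW).eventually (eventually_exists_ell1_rescaling hg)
  obtain ⟨ε₀, ⟨x₀, hx₀, -⟩, hε₀⟩ := (h_rescale.and self_mem_nhdsWithin).exists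
  have h_sum : Summable fun α => ‖a α * ε₀ ^ ∑ i, W i * α i‖ := by
    simpa only [hx₀] using summable_norm_ell1 x₀
  filter_upwards [h_rescale, eventually_norm_ell1Basis_sub_smul_le hε₀ h_sum hβ h_lt hδ]
    with ε ⟨x, hx, hx_eval⟩ h_near
  exact ⟨x, _, h_near x hx, hx_eval⟩

theorem exists_division_of_weight {J : Type*} [Fintype J] {f : (ι → ℂ) → ℂ}
    (hf : AnalyticAt ℂ f 0) {g : J → (ι → ℂ) → ℂ} {a : J → (ι → ℕ) → ℂ}
    (hg : ∀ j, ∀ᶠ z in 𝓝 0, HasSum (fun α => a j α * multiPow z α) (g j z)) {W : ι → ℕ}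
    (hW : ∀ i, W i ≠ 0) {β : J → ι → ℕ} (hβ : ∀ j, a j (β j) ≠ 0)
    (h_lt : ∀ j γ, a j γ ≠ 0 → γ ≠ β j → ∑ i, W i * β j i < ∑ i, W i * γ i) :
    ∃ (q : J → (ι → ℂ) → ℂ) (c : (ι → ℕ) → ℂ), (∀ j, AnalyticAt ℂ (q j) 0) ∧
      (∀ᶠ z in 𝓝 0, HasSum (fun α => c α * multiPow z α) (f z - ∑ j, q j z * g j z)) ∧
      ∀ j γ, c (γ + β j) = 0 := by
  classical
  obtain ⟨d, hd⟩ := exists_eventually_hasSum_multiPow_of_analyticAt hf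
  have h_near := eventually_all.2 fun j =>
    eventually_exists_ell1_rescaling_near_ell1Basis (hg j) hW (hβ j) (h_lt j) one_half_pos
  have h_rescale := (tendsto_pow_weight_zero hW).eventually (eventually_exists_ell1_rescaling hd)
  obtain ⟨ε, ⟨h_near, x, -, hx⟩, hε⟩ := ((h_near.and h_rescale).and self_mem_nhdsWithin).exists
  choose y b hyb hy using h_near
  obtain ⟨q, r, hqr, hr⟩ := exists_ell1_division one_half_pos.le one_half_lt_one hyb x
  let σ : ι → ℂ := fun i => (ε ^ W i)⁻¹
  refine ⟨fun j z => ∑' α, q j α * multiPow (σ * z) α, fun α => r α * multiPow σ α,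
    fun j => analyticAt_tsum_mul_multiPow_mul (q j) σ, ?_, fun j γ => by simp [hr]⟩
  filter_upwards [eventually_norm_mul_le_one σ] with z hz
  have hσz : (fun i => ε ^ W i) * (σ * z) = z :=
    funext fun i => mul_inv_cancel_left₀ (pow_ne_zero _ hε) (z i)
  have h_eval : f z - ∑ j, ell1Eval _ hz (q j) * g j z = ell1Eval _ hz r := by
    have h := congrArg (ell1Eval _ hz) hqr
    simp only [map_add, map_sum, ell1Eval_ell1Mul, hx, hy, hσz] at h
    rw [h, sub_eq_iff_eq_add']
    simp only [mul_comm]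
  simpa only [mul_assoc, ← mul_multiPow] using!
    h_eval ▸ (summable_ell1_smul r (norm_multiPow_le_one hz)).hasSum

end Division

/-! ### Germs of holomorphic functions -/

section Germs

variable {n : ℕ}

theorem hasTaylorCoeffsAt_iff_eventually_hasSum {f : (Fin n → ℂ) → ℂ} {a : (Fin n → ℕ) → ℂ} :
    HasTaylorCoeffsAt f a ↔ ∀ᶠ z in 𝓝 0, HasSum (fun α => a α * multiPow z α) (f z) := by
  rw [eventually_iff_exists_mem]
  refine exists_congr fun U => and_congr_right fun _ => forall₂_congr fun z _ => ?_
  exact ⟨fun h => h.2 ▸ h.1.hasSum, fun h => ⟨h.summable, h.tsum_eq.symm⟩⟩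

theorem HasTaylorCoeffsAt.exists_germIsInitialMonomialOf {f : (Fin n → ℂ) → ℂ}
    {a : (Fin n → ℕ) → ℂ} (hf : HasTaylorCoeffsAt f a) (hf₀ : (f : GermAt0 n) ≠ 0) :
    ∃ α, a α ≠ 0 ∧ GermIsInitialMonomialOf α (f : GermAt0 n) := by
  have ha : {α | a α ≠ 0}.Nonempty := by
    by_contra! h_empty
    refine hf₀ (Germ.coe_eq.2 ?_)
    filter_upwards [hasTaylorCoeffsAt_iff_eventually_hasSum.1 hf] with z hz
    have ha (α : Fin n → ℕ) : a α = 0 := by simpa using Set.eq_empty_iff_forall_notMem.1 h_empty α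
    exact hz.unique (by simpa only [ha, zero_mul] using hasSum_zero)
  obtain ⟨α, hα, h_min⟩ := exists_forall_monLE ha
  exact ⟨α, hα, f, a, rfl, hf, hα, h_min⟩

theorem exists_germ_division {J : Type*} [Fintype J] {g : J → HoloGerms n} {β : J → Fin n → ℕ}
    (hg : ∀ j, GermIsInitialMonomialOf (β j) (g j : GermAt0 n)) (F : HoloGerms n) :
    ∃ (q : J → HoloGerms n) (r : (Fin n → ℂ) → ℂ) (c : (Fin n → ℕ) → ℂ),
      ((F - ∑ j, q j * g j : HoloGerms n) : GermAt0 n) = r ∧ HasTaylorCoeffsAt r c ∧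
      ∀ j γ, c (γ + β j) = 0 := by
  obtain ⟨f, hf, hF⟩ := F.2
  choose G a hgG hG ha h_min using hg
  obtain ⟨W, hW, h_lt⟩ := exists_weight_lt_of_monLE β
  obtain ⟨q, c, hq, hc, hc_zero⟩ := exists_division_of_weight hf
    (fun j => hasTaylorCoeffsAt_iff_eventually_hasSum.1 (hG j)) hW ha
    fun j γ hγ => h_lt j γ (h_min j γ hγ)
  refine ⟨fun j => ⟨q j, q j, hq j, rfl⟩, fun z => f z - ∑ j, q j z * G j z, c, ?_,
    hasTaylorCoeffsAt_iff_eventually_hasSum.2 hc, hc_zero⟩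
  have h_fun : (fun z => f z - ∑ j, q j z * G j z) = f - ∑ j, q j * G j := by
    ext z
    simp
  have h_sum : ((∑ j, q j * G j : (Fin n → ℂ) → ℂ) : GermAt0 n) =
      ∑ j, (q j : GermAt0 n) * (G j : GermAt0 n) :=
    map_sum (Germ.coeRingHom (R := ℂ) (𝓝 (0 : Fin n → ℂ))) _ _
  simp only [AddSubgroupClass.coe_sub, AddSubmonoidClass.coe_finsetSum, Subring.coe_mul, hF, hgG,
    h_fun, Germ.coe_sub, h_sum]

theorem standard_basis_generates_general {κ : Type*} (I : Ideal (HoloGerms n))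
    (g : κ → HoloGerms n) (hg : ∀ i, g i ∈ I)
    (hIM : ∀ F ∈ I, ∀ α, GermIsInitialMonomialOf α (F : GermAt0 n) →
      ∃ i, ∃ β, GermIsInitialMonomialOf β (g i : GermAt0 n) ∧ β ≤ α) :
    I = Ideal.span (Set.range g) := by
  refine le_antisymm (fun F hF => ?_) (Ideal.span_le.2 (Set.range_subset_iff.2 hg))
  obtain ⟨M, hM, hM_fin, hM_le⟩ := exists_finite_subset_forall_exists_le
    {β | ∃ i, GermIsInitialMonomialOf β (g i : GermAt0 n)}
  have := hM_fin.fintype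
  choose i hi using fun β : M => hM β.2
  obtain ⟨q, r, c, hr, hrc, hc⟩ := exists_germ_division hi F
  have h_sum : ∑ j, q j * g (i j) ∈ Ideal.span (Set.range g) :=
    sum_mem fun j _ => Ideal.mul_mem_left _ _ (Ideal.subset_span ⟨i j, rfl⟩)
  have h_rem : F - ∑ j, q j * g (i j) ∈ I :=
    sub_mem hF (sum_mem fun j _ => I.mul_mem_left _ (hg _))
  suffices (r : GermAt0 n) = 0 by
    rwa [sub_eq_zero.1 (Subtype.ext (hr.trans this))]
  by_contra hr₀
  obtain ⟨α, hα, hα_init⟩ := hrc.exists_germIsInitialMonomialOf hr₀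
  obtain ⟨k, β, hβ, hβα⟩ := hIM _ h_rem α (hr ▸ hα_init)
  obtain ⟨γ, hγ, hγβ⟩ := hM_le β ⟨k, hβ⟩
  refine hα ?_
  simpa only [tsub_add_cancel_of_le (hγβ.trans hβα)] using hc ⟨γ, hγ⟩ (α - γ)

end Germs

/-- If `g₁, …, g_k` are elements of an ideal `ℐ` of `𝒪_{ℂⁿ,0}` whose initial monomials generate
the same monomial ideal as the initial monomials of all elements of `ℐ` (a standard basis),
then `g₁, …, g_k` generate `ℐ`. -/
theorem standard_basis_generates
    {n k : ℕ} (I : Ideal (HoloGerms n)) (g : Fin k → HoloGerms n) (hg : ∀ i, g i ∈ I)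
    (hIM : ∀ α : Fin n → ℕ,
      (∃ F ∈ I, ∃ β, GermIsInitialMonomialOf β (F : GermAt0 n) ∧ β ≤ α) ↔
      (∃ i, ∃ β, GermIsInitialMonomialOf β ((g i : HoloGerms n) : GermAt0 n) ∧ β ≤ α)) :
    I = Ideal.span (Set.range g) :=
  standard_basis_generates_general I g hg fun F hF α hα => (hIM α).1 ⟨F, hF, α, hα, le_rfl⟩
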